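/- Let v₁ = (v₁¹, v₁²), v₂ = (v₂¹, v₂²) ∈ ℝ² with v₂¹ ≠ v₁¹, and let b₁, b₂ ∈ ℝ. Define ξ := ( −(v₂² − v₁²)/(v₂¹ − v₁¹), 1, −(v₂¹ v₁² − v₁¹ v₂²)/(v₂¹ − v₁¹) ) ∈ ℝ³. Then ξ ≠ 0 and the 4×3 matrix whose first two rows are ( v₂⊗v₂ − v₁⊗v₁ | v₂ − v₁ ), whose third row is ( (v₂ − v₁)ᵀ | 0 ), and whose fourth row is ( (b₂ v₂ − b₁ v₁)ᵀ | b₂ − b₁ ), annihilates ξ, i.e., its product with ξ is the zero vector in ℝ⁴. -/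

import Mathlib

open Matrix

noncomputable section

/-- Explicit kernel vector for differences of constraint states: with
`v₁ = (v11, v12)`, `v₂ = (v21, v22)`, `v21 ≠ v11`, the vector
`ξ = (−(v22−v12)/(v21−v11), 1, −(v21·v12 − v11·v22)/(v21−v11))` is nonzero and is
annihilated by the 4×3 matrix with rows `(v₂⊗v₂ − v₁⊗v₁ | v₂−v₁)`, `((v₂−v₁)ᵀ | 0)`,
`((b₂v₂ − b₁v₁)ᵀ | b₂−b₁)`. -/
theorem stmt_6 (v11 v12 v21 v22 b1 b2 : ℝ) (h : v21 ≠ v11) :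
    (![-(v22 - v12) / (v21 - v11), 1, -(v21 * v12 - v11 * v22) / (v21 - v11)] :
        Fin 3 → ℝ) ≠ 0 ∧
    (![![v21 * v21 - v11 * v11, v21 * v22 - v11 * v12, v21 - v11],
       ![v22 * v21 - v12 * v11, v22 * v22 - v12 * v12, v22 - v12],
       ![v21 - v11, v22 - v12, 0],
       ![b2 * v21 - b1 * v11, b2 * v22 - b1 * v12, b2 - b1]] :
        Matrix (Fin 4) (Fin 3) ℝ) *ᵥ
      ![-(v22 - v12) / (v21 - v11), 1, -(v21 * v12 - v11 * v22) / (v21 - v11)] = 0 := by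
  have hd : v21 - v11 ≠ 0 := sub_ne_zero.mpr h
  refine ⟨fun h0 => ?_, ?_⟩
  · -- the middle coordinate of `ξ` is `1`
    have h1 := congrFun h0 1
    simp at h1
  · ext i
    fin_cases i <;> simp [Matrix.mulVec, dotProduct, Fin.sum_univ_succ] <;> field_simp <;> ring
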